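/- arXiv:1610.02676 — 2 statements merged into one kernel-verified Lean document; each statement's English description precedes it below -/
import Mathlib

section
/- Let G be a graph, let A, A' be subsets of V(G), let P be a partition of A and P' a partition of A', and suppose d(A,A') ≠ 0. Then H(P,P') − H({A},{A'}) ≥ (1/2) · d(A,A') · ( Σ_{V ∈ P, V' ∈ P'} (|V||V'|/(|A||A'|)) · |d(V,V')/d(A,A') − 1| )². -/
/-!
Put `d = d(A,A')`. With the weights `|W||W'|/(|A||A'|)`, which sum to `1`, the densities `d(W,W')`
average to `d`, so the gain in potential is a Jensen gap of `H`. For any weights `w` and values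
`y` averaging to `d`, this gap is `d * ∑ w * klFun (y / d)`, where `klFun x = x log x + 1 - x` is
the error of the tangent to `H` at `1`; this reduces the claim to Pinsker's inequality. The latter
follows by Cauchy–Schwarz from the pointwise bound `3 (x - 1)² ≤ (2x + 4) klFun x`.
-/

open Finset
open scoped Classical

/-- `eCnt G A B` is the number of ordered pairs `(u,v) ∈ A × B` with `uv` an edge of `G`. -/
noncomputable def eCnt {V : Type*} [Fintype V] (G : SimpleGraph V) (A B : Finset V) : ℕ :=
  ((A ×ˢ B).filter fun p => G.Adj p.1 p.2).card

/-- The edge density `d(A,B)` between vertex subsets `A` and `B`. -/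
noncomputable def dens {V : Type*} [Fintype V] (G : SimpleGraph V) (A B : Finset V) : ℝ :=
  eCnt G A B / (A.card * B.card)

/-- The function `H(x) = x ln x` (with `0 ln 0 = 0`, which holds for `Real.log`). -/
noncomputable def Hent (x : ℝ) : ℝ := x * Real.log x

/-- The entropy potential `H(P,P')` of a partition `P` of `A ⊆ V(G)` and a partition `P'`
of `A' ⊆ V(G)`: `H(P,P') = Σ_{W ∈ P, W' ∈ P'} (|W||W'|/(|A||A'|))·H(d(W,W'))`. -/
noncomputable def pot {V : Type*} [Fintype V] [DecidableEq V] (G : SimpleGraph V)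
    {A A' : Finset V} (P : Finpartition A) (P' : Finpartition A') : ℝ :=
  ∑ W ∈ P.parts, ∑ W' ∈ P'.parts,
    ((W.card : ℝ) * W'.card / ((A.card : ℝ) * A'.card)) * Hent (dens G W W')

open InformationTheory (klFun klFun_apply klFun_one klFun_nonneg continuous_klFun hasDerivAt_klFun)

lemma two_mul_sub_one_le_add_one_mul_log {x : ℝ} (hx : 1 ≤ x) :
    2 * (x - 1) ≤ (x + 1) * Real.log x := by
  have h := Real.le_log_one_add_of_nonneg (sub_nonneg.2 hx)
  rw [div_le_iff₀ (by linarith), add_sub_cancel] at h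
  linarith

lemma add_one_mul_log_le_two_mul_sub_one {x : ℝ} (hx₀ : 0 < x) (hx₁ : x ≤ 1) :
    (x + 1) * Real.log x ≤ 2 * (x - 1) := by
  have h := mul_le_mul_of_nonneg_left
    (two_mul_sub_one_le_add_one_mul_log ((one_le_inv₀ hx₀).2 hx₁)) hx₀.le
  rw [Real.log_inv] at h
  field_simp at h
  linarith

lemma three_mul_sq_sub_one_le_mul_klFun {x : ℝ} (hx : 0 ≤ x) :
    3 * (x - 1) ^ 2 ≤ (2 * x + 4) * klFun x := by
  set g : ℝ → ℝ := fun y => (2 * y + 4) * klFun y - 3 * (y - 1) ^ 2 with hg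
  have hderiv {y : ℝ} (hy : 0 < y) :
      HasDerivAt g (4 * ((y + 1) * Real.log y - 2 * (y - 1))) y := by
    have hlin : HasDerivAt (fun y : ℝ => 2 * y + 4) (2 * 1) y :=
      ((hasDerivAt_id y).const_mul 2).add_const 4
    have hsq : HasDerivAt (fun y : ℝ => 3 * (y - 1) ^ 2) (3 * (2 * (y - 1))) y := by
      simpa using (((hasDerivAt_id y).sub_const 1).pow 2).const_mul 3
    refine ((hlin.mul (hasDerivAt_klFun hy.ne')).sub hsq).congr_deriv ?_
    rw [klFun_apply]
    ring
  have hcont : Continuous g := by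
    have := continuous_klFun
    fun_prop
  have hmin : IsMinOn g (Set.Ici 0) 1 := by
    refine isMinOn_Ici_of_deriv hcont.continuousAt hcont.continuousAt
      (fun y hy => (hderiv hy.1).differentiableAt.differentiableWithinAt)
      (fun y hy => (hderiv (one_pos.trans hy)).differentiableAt.differentiableWithinAt)
      (fun y hy => ?_) (fun y hy => ?_)
    · rw [(hderiv hy.1).deriv]
      linarith [add_one_mul_log_le_two_mul_sub_one hy.1 hy.2.le]
    · rw [(hderiv (one_pos.trans hy)).deriv]
      linarith [two_mul_sub_one_le_add_one_mul_log (le_of_lt hy)]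
  have hg_one : g 1 = 0 := by simp [hg, klFun_one]
  exact sub_nonneg.1 (hg_one ▸ hmin hx)

lemma mul_klFun_div {d : ℝ} (hd : d ≠ 0) (y : ℝ) :
    d * klFun (y / d) = Hent y - y * Real.log d + d - y := by
  rcases eq_or_ne y 0 with rfl | hy
  · simp [klFun_apply, Hent]
  · rw [klFun_apply, Hent, Real.log_div hy hd]
    field_simp

section WeightedSums

variable {ι : Type*} {s : Finset ι} {w : ι → ℝ}

/-- Pinsker's inequality without normalization: if `w` and `w * x` are probability
distributions, then the first factor on the right is `2`. -/
lemma sq_sum_mul_abs_sub_one_le_mul_sum_klFun {x : ι → ℝ} (hw : ∀ i ∈ s, 0 ≤ w i)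
    (hx : ∀ i ∈ s, 0 ≤ x i) :
    (∑ i ∈ s, w i * |x i - 1|) ^ 2 ≤
      2 / 3 * (∑ i ∈ s, w i * x i + 2 * ∑ i ∈ s, w i) * ∑ i ∈ s, w i * klFun (x i) := by
  have hfactor : 2 / 3 * (∑ i ∈ s, w i * x i + 2 * ∑ i ∈ s, w i) =
      ∑ i ∈ s, w i * ((2 * x i + 4) / 3) := by
    rw [mul_sum, ← sum_add_distrib, mul_sum]
    exact sum_congr rfl fun i _ => by ring
  rw [hfactor]
  refine sum_sq_le_sum_mul_sum_of_sq_le_mul s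
    (fun i hi => mul_nonneg (hw i hi) (by linarith [hx i hi]))
    (fun i hi => mul_nonneg (hw i hi) (klFun_nonneg (hx i hi))) fun i hi => ?_
  calc (w i * |x i - 1|) ^ 2 = w i ^ 2 / 3 * (3 * (x i - 1) ^ 2) := by
        rw [mul_pow, sq_abs]; ring
    _ ≤ w i ^ 2 / 3 * ((2 * x i + 4) * klFun (x i)) := by
        gcongr ?_ * ?_
        exact three_mul_sq_sub_one_le_mul_klFun (hx i hi)
    _ = w i * ((2 * x i + 4) / 3) * (w i * klFun (x i)) := by ring

lemma sum_mul_Hent_sub_Hent {y : ι → ℝ} {d : ℝ} (hw : ∑ i ∈ s, w i = 1)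
    (hy : ∑ i ∈ s, w i * y i = d) (hd : d ≠ 0) :
    ∑ i ∈ s, w i * Hent (y i) - Hent d = d * ∑ i ∈ s, w i * klFun (y i / d) := by
  have hterm (i : ι) : d * (w i * klFun (y i / d)) =
      w i * Hent (y i) - w i * y i * Real.log d + w i * d - w i * y i := by
    rw [mul_left_comm, mul_klFun_div hd]
    ring
  simp only [mul_sum, hterm, sum_sub_distrib, sum_add_distrib, ← sum_mul, hw, hy, Hent]
  ring

lemma half_mul_sq_sum_le_sum_mul_Hent_sub_Hent {y : ι → ℝ} {d : ℝ}
    (hw₀ : ∀ i ∈ s, 0 ≤ w i) (hw : ∑ i ∈ s, w i = 1) (hy₀ : ∀ i ∈ s, 0 ≤ y i)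
    (hy : ∑ i ∈ s, w i * y i = d) (hd : d ≠ 0) :
    (1 / 2) * d * (∑ i ∈ s, w i * |y i / d - 1|) ^ 2 ≤
      ∑ i ∈ s, w i * Hent (y i) - Hent d := by
  have hd₀ : 0 ≤ d := hy ▸ sum_nonneg fun i hi => mul_nonneg (hw₀ i hi) (hy₀ i hi)
  have hratio : ∑ i ∈ s, w i * (y i / d) = 1 := by
    simp only [← mul_div_assoc, ← sum_div, hy, div_self hd]
  have hpinsker : (∑ i ∈ s, w i * |y i / d - 1|) ^ 2 ≤ 2 * ∑ i ∈ s, w i * klFun (y i / d) := by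
    have h := sq_sum_mul_abs_sub_one_le_mul_sum_klFun hw₀ fun i hi => div_nonneg (hy₀ i hi) hd₀
    rw [hratio, hw] at h
    linarith
  calc (1 / 2) * d * (∑ i ∈ s, w i * |y i / d - 1|) ^ 2
      ≤ (1 / 2) * d * (2 * ∑ i ∈ s, w i * klFun (y i / d)) := by gcongr
    _ = d * ∑ i ∈ s, w i * klFun (y i / d) := by ring
    _ = ∑ i ∈ s, w i * Hent (y i) - Hent d := (sum_mul_Hent_sub_Hent hw hy hd).symm

end WeightedSums

section CellWeight

variable {α β : Type*}

/-- The proportion `|W||W'|/(|A||A'|)` of the rectangle `A × A'` taken up by the cell `W × W'`,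
with the cell given as the pair `q = (W, W')` so that the weights of all cells form a single sum.
It is `0` if `A` or `A'` is empty. -/
noncomputable def cellWeight (A : Finset α) (A' : Finset β) (q : Finset α × Finset β) : ℝ :=
  (q.1.card : ℝ) * q.2.card / ((A.card : ℝ) * A'.card)

lemma cellWeight_nonneg (A : Finset α) (A' : Finset β) (q : Finset α × Finset β) :
    0 ≤ cellWeight A A' q := by
  unfold cellWeight
  positivity

lemma sum_cellWeight [DecidableEq α] [DecidableEq β] {A : Finset α} {A' : Finset β}
    (P : Finpartition A) (P' : Finpartition A') (hA : A.Nonempty) (hA' : A'.Nonempty) :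
    ∑ q ∈ P.parts ×ˢ P'.parts, cellWeight A A' q = 1 := by
  have hcard : (A.card : ℝ) * A'.card ≠ 0 := by
    simp [hA.ne_empty, hA'.ne_empty]
  simp only [cellWeight, ← sum_div, sum_product]
  rw [← sum_mul_sum, ← Nat.cast_sum, ← Nat.cast_sum, P.sum_card_parts, P'.sum_card_parts,
    div_self hcard]

end CellWeight

section Density

variable {V : Type*} [Fintype V] (G : SimpleGraph V)

lemma dens_nonneg (A B : Finset V) : 0 ≤ dens G A B := by
  unfold _root_.dens
  positivity

variable {G} in
lemma nonempty_of_dens_ne_zero {A B : Finset V} (h : dens G A B ≠ 0) :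
    A.Nonempty ∧ B.Nonempty := by
  simp only [nonempty_iff_ne_empty]
  constructor <;> rintro rfl <;> simp [_root_.dens] at h

lemma card_mul_card_mul_dens (A B : Finset V) :
    (A.card : ℝ) * B.card * dens G A B = eCnt G A B := by
  refine mul_div_cancel_of_imp' fun h => ?_
  have hAB : A ×ˢ B = ∅ := by
    rwa [← card_eq_zero, card_product, ← Nat.cast_eq_zero (R := ℝ), Nat.cast_mul]
  simp [eCnt, hAB]

lemma sum_cellWeight_mul_dens [DecidableEq V] {A A' : Finset V} (P : Finpartition A)
    (P' : Finpartition A') :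
    ∑ q ∈ P.parts ×ˢ P'.parts, cellWeight A A' q * dens G q.1 q.2 = dens G A A' := by
  have heCnt : eCnt G A A' = ∑ q ∈ P.parts ×ˢ P'.parts, eCnt G q.1 q.2 :=
    Rel.card_interedges_finpartition G.Adj P P'
  simp only [cellWeight, div_mul_eq_mul_div, card_mul_card_mul_dens, ← sum_div]
  rw [← Nat.cast_sum, ← heCnt, _root_.dens]

end Density

/-- **Uniform defect inequality for the potential (Corollary 3.3).**
If `P` is a partition of `A`, `P'` is a partition of `A'` and `d(A,A') ≠ 0`, then
`H(P,P') − H({A},{A'}) ≥ (1/2)·d(A,A')·(Σ_{W,W'} (|W||W'|/(|A||A'|))·|d(W,W')/d(A,A') − 1|)²`. -/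
theorem potential_defect {V : Type*} [Fintype V] [DecidableEq V] (G : SimpleGraph V)
    (A A' : Finset V) (P : Finpartition A) (P' : Finpartition A')
    (hd : dens G A A' ≠ 0) :
    (1 / 2) * dens G A A' *
        (∑ W ∈ P.parts, ∑ W' ∈ P'.parts,
          ((W.card : ℝ) * W'.card / ((A.card : ℝ) * A'.card)) *
            |dens G W W' / dens G A A' - 1|) ^ 2 ≤
      pot G P P' - Hent (dens G A A') := by
  obtain ⟨hA, hA'⟩ := nonempty_of_dens_ne_zero hd
  have hdefect := half_mul_sq_sum_le_sum_mul_Hent_sub_Hent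
    (fun q _ => cellWeight_nonneg A A' q) (sum_cellWeight P P' hA hA')
    (fun q _ => dens_nonneg G q.1 q.2) (sum_cellWeight_mul_dens G P P') hd
  simpa only [pot, cellWeight, sum_product] using hdefect
end

section
/- Let α > 0, let s be a positive integer, and let g : ℕ → (0,1) be a decreasing function. For every graph G of density p > 0 and every equipartition P₀ of V(G) of order s, there exist equipartitions Q ⪯ P of V(G), both refining P₀ with Q refining P, such that: (i) Q is weak g(|P|)-regular; (ii) H(Q) − H(P) < α·p·ln(1/p); and (iii) |P| ≤ E^{(⌊1/α⌋)}(s), where E(x) = x·2^{16/g(x)⁵} and E^{(m)} denotes m-fold iteration. -/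
/-!
The entropy potential of a partition is the mean of `H` over its block densities, so it is at most
`0` because densities are at most `1`, and at least `H(p) = -p ln(1/p)` by Jensen's inequality for
`x ln x`. Starting from `P₀`, keep replacing the current partition `P` by a weak `g(|P|)`-regular
refinement `Q` with at most `E(|P|)` parts. At most `⌊1/α⌋` steps can raise the potential by
`α p ln(1/p)` or more, and the first step that does not provides the pair `P`, `Q`.

The weak regularity lemma behind each step is the same increment argument for the `L²` energy.
If disjoint sets `S, T` witness that `P` is not weak `ε`-regular, the signs of the block deviations
give a test function, constant on the blocks of `P`, that correlates with the edges minus their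
block densities on `S × T`. Cut every part of `P` equitably into `M = ⌈8/ε²⌉` pieces so that all
but `|V|/M` vertices of each of `S` and `T` lie in pieces contained in that set; three quarters of
the correlation survive on these pieces, and Pythagoras and Cauchy–Schwarz turn it into an energy
gain of `9ε⁴/16`. As the energy stays in `[0, 1]`, at most `2/ε⁴` rounds occur, and
`M ≤ 1 + 8/ε² ≤ exp(4/ε)` gives `M^(2/ε⁴) ≤ exp(8/ε⁵) ≤ 2^(16/ε⁵)`.
-/

open Finset
open scoped Classical

/-- The density `d_G = 2|E|/|V|²` of a graph. -/
noncomputable def graphDensity {V : Type*} [Fintype V] (G : SimpleGraph V) : ℝ :=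
  2 * G.edgeSet.ncard / (Fintype.card V : ℝ) ^ 2

/-- A partition `{V₁,…,V_k}` of the vertex set is weak `ε`-regular if for all disjoint
`S, T ⊆ V` with `|S|, |T| ≥ ε|V|` we have
`Σ_{i,j} (|S ∩ V_i||T ∩ V_j|/(|S||T|))·|d(S ∩ V_i, T ∩ V_j) − d(V_i,V_j)| ≤ ε`. -/
def IsWeakRegular {V : Type*} [Fintype V] [DecidableEq V] (G : SimpleGraph V) (ε : ℝ)
    (P : Finpartition (univ : Finset V)) : Prop :=
  ∀ S T : Finset V, Disjoint S T →
    ε * Fintype.card V ≤ S.card → ε * Fintype.card V ≤ T.card →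
    ∑ U ∈ P.parts, ∑ U' ∈ P.parts,
      ((S ∩ U).card : ℝ) * ((T ∩ U').card : ℝ) / (S.card * T.card) *
        |dens G (S ∩ U) (T ∩ U') - dens G U U'| ≤ ε

open scoped BigOperators

lemma exists_good_of_potential_bounded {X : Type*} [Preorder X] {good : X → Prop} {φ : X → ℝ}
    {size : X → ℕ} {E : ℕ → ℕ} (hE : Monotone E) (hid : id ≤ E) {c : ℝ} (N : ℕ) {x₀ : X}
    (hφ : ∀ x ≤ x₀, φ x < φ x₀ + (N + 1) * c)
    (step : ∀ x ≤ x₀, ¬ good x → ∃ y ≤ x, size y ≤ E (size x) ∧ φ x + c ≤ φ y) :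
    ∃ x ≤ x₀, good x ∧ size x ≤ E^[N] (size x₀) := by
  induction N generalizing x₀ with
  | zero =>
    refine ⟨x₀, le_rfl, by_contra fun hbad ↦ ?_, le_rfl⟩
    obtain ⟨y, hy, -, hinc⟩ := step x₀ le_rfl hbad
    have := hφ y hy
    push_cast at this
    linarith
  | succ N ih =>
    by_cases hgood : good x₀
    · exact ⟨x₀, le_rfl, hgood, Function.id_le_iterate_of_id_le hid _ _⟩
    obtain ⟨y, hy, hsize, hinc⟩ := step x₀ le_rfl hgood
    obtain ⟨x, hx, hgx, hsx⟩ := ih (x₀ := y)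
      (fun x hx ↦ by have := hφ x (hx.trans hy); push_cast at this; linarith)
      (fun x hx ↦ step x (hx.trans hy))
    exact ⟨x, hx.trans hy, hgx, hsx.trans (hE.iterate N hsize)⟩

section FiberMean

variable {α κ κ' : Type*} [Fintype α] [DecidableEq κ] [DecidableEq κ']
  {π : α → κ} {ρ : α → κ'} {f h : α → ℝ} {A : Finset α}

/-- The conditional expectation of `f` with respect to the partition of `α` into the fibres of
the labelling `π`. A function is measurable for this partition if it factors through `π`. -/
noncomputable def fiberMean (π : α → κ) (f : α → ℝ) (x : α) : ℝ :=
  𝔼 y with π y = π x, f y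

/-- The normalised `L²` energy of `f` with respect to the fibres of `π`. -/
noncomputable def fiberEnergy (π : α → κ) (f : α → ℝ) : ℝ :=
  𝔼 x, fiberMean π f x ^ 2

lemma fiberMean_factorsThrough (π : α → κ) (f : α → ℝ) : (fiberMean π f).FactorsThrough π :=
  fun x y hxy ↦ by simp only [fiberMean, hxy]

lemma fiberMean_mem_Icc {a b : ℝ} (hf : ∀ x, f x ∈ Set.Icc a b) (x : α) :
    fiberMean π f x ∈ Set.Icc a b := by
  have hne : ({y | π y = π x} : Finset α).Nonempty := ⟨x, by simp⟩
  exact ⟨le_expect hne fun y _ ↦ (hf y).1, expect_le hne fun y _ ↦ (hf y).2⟩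

lemma sum_fiberMean_mul (hA : (· ∈ A).FactorsThrough π) (hh : h.FactorsThrough π) :
    ∑ x ∈ A, fiberMean π f x * h x = ∑ x ∈ A, f x * h x := by
  have hmaps : ∀ x ∈ A, π x ∈ A.image π := fun _ ↦ mem_image_of_mem π
  rw [← sum_fiberwise_of_maps_to hmaps, ← sum_fiberwise_of_maps_to hmaps]
  refine sum_congr rfl fun k hk ↦ ?_
  obtain ⟨x₀, hx₀, rfl⟩ := mem_image.1 hk
  have hfiber : {x ∈ A | π x = π x₀} = ({x | π x = π x₀} : Finset α) := by
    ext x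
    simpa using fun hx : π x = π x₀ ↦ (hA hx).mpr hx₀
  rw [hfiber]
  calc ∑ x with π x = π x₀, fiberMean π f x * h x
      = ∑ x with π x = π x₀, fiberMean π f x₀ * h x₀ := sum_congr rfl fun x hx ↦ by
        rw [fiberMean_factorsThrough π f (mem_filter.1 hx).2, hh (mem_filter.1 hx).2]
    _ = (∑ x with π x = π x₀, f x) * h x₀ := by
        rw [sum_const, nsmul_eq_mul, ← mul_assoc, fiberMean, card_mul_expect]
    _ = ∑ x with π x = π x₀, f x * h x := by
        rw [sum_mul]
        exact sum_congr rfl fun x hx ↦ by rw [hh (mem_filter.1 hx).2]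

lemma sum_fiberMean (π : α → κ) (f : α → ℝ) : ∑ x, fiberMean π f x = ∑ x, f x := by
  simpa using sum_fiberMean_mul (π := π) (f := f) (A := univ) (h := 1)
    (fun _ _ _ ↦ by simp) (fun _ _ _ ↦ rfl)

lemma card_mul_fiberEnergy_sub (hπρ : π.FactorsThrough ρ) :
    Fintype.card α * (fiberEnergy ρ f - fiberEnergy π f) =
      ∑ x, (fiberMean ρ f x - fiberMean π f x) ^ 2 := by
  have hρ : ∑ x, fiberMean ρ f x * fiberMean π f x = ∑ x, f x * fiberMean π f x :=
    sum_fiberMean_mul (fun _ _ _ ↦ by simp) fun _ _ e ↦ fiberMean_factorsThrough π f (hπρ e)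
  have hπ : ∑ x, fiberMean π f x * fiberMean π f x = ∑ x, f x * fiberMean π f x :=
    sum_fiberMean_mul (fun _ _ _ ↦ by simp) (fiberMean_factorsThrough π f)
  simp only [fiberEnergy, mul_sub, Fintype.card_mul_expect, sub_sq, sum_add_distrib,
    sum_sub_distrib, mul_assoc, ← mul_sum, hρ, ← hπ, ← sq]
  ring

lemma sq_sum_mul_sub_fiberMean_le (hπρ : π.FactorsThrough ρ) (hA : (· ∈ A).FactorsThrough ρ)
    (hh : h.FactorsThrough π) (hh1 : ∀ x, |h x| ≤ 1) :
    (∑ x ∈ A, (f x - fiberMean π f x) * h x) ^ 2 ≤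
      #A * (Fintype.card α * (fiberEnergy ρ f - fiberEnergy π f)) := by
  rw [card_mul_fiberEnergy_sub hπρ]
  calc (∑ x ∈ A, (f x - fiberMean π f x) * h x) ^ 2
      = (∑ x ∈ A, (fiberMean ρ f x - fiberMean π f x) * h x) ^ 2 := by
        simp only [sub_mul, sum_sub_distrib, sum_fiberMean_mul hA fun _ _ e ↦ hh (hπρ e)]
    _ ≤ #A * ∑ x ∈ A, ((fiberMean ρ f x - fiberMean π f x) * h x) ^ 2 :=
        sq_sum_le_card_mul_sum_sq
    _ ≤ #A * ∑ x, (fiberMean ρ f x - fiberMean π f x) ^ 2 := by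
        gcongr
        refine (sum_le_sum fun x _ ↦ ?_).trans
          (sum_le_univ_sum_of_nonneg fun x ↦ sq_nonneg (fiberMean ρ f x - fiberMean π f x))
        rw [mul_pow]
        exact mul_le_of_le_one_right (sq_nonneg _) ((sq_le_one_iff_abs_le_one _).2 (hh1 x))

end FiberMean

section Blocks

variable {V : Type*} [Fintype V] [DecidableEq V] {P Q : Finpartition (univ : Finset V)}
  {A S T : Finset V}

/-- The block of `V × V` containing a pair of vertices: the pair of parts of `P` containing them.
A function of pairs of vertices is constant on blocks if it factors through `blockLabel P`. -/
def blockLabel (P : Finpartition (univ : Finset V)) : V × V → Finset V × Finset V :=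
  Prod.map P.part P.part

lemma part_factorsThrough_of_le (h : Q ≤ P) : P.part.FactorsThrough Q.part := by
  intro x y hxy
  obtain ⟨U, hU, hQU⟩ := h (Q.part_mem.2 (mem_univ x))
  have hx : x ∈ U := hQU (Q.mem_part (mem_univ x))
  have hy : y ∈ U := hQU (hxy ▸ Q.mem_part (mem_univ y))
  rw [P.part_eq_of_mem hU hx, P.part_eq_of_mem hU hy]

lemma blockLabel_factorsThrough_of_le (h : Q ≤ P) :
    (blockLabel P).FactorsThrough (blockLabel Q) := fun _ _ hxy ↦
  Prod.ext (part_factorsThrough_of_le h (Prod.ext_iff.1 hxy).1)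
    (part_factorsThrough_of_le h (Prod.ext_iff.1 hxy).2)

lemma sum_blocks (P : Finpartition (univ : Finset V)) (S T : Finset V) (F : V × V → ℝ) :
    ∑ U ∈ P.parts, ∑ W ∈ P.parts, ∑ q ∈ (S ∩ U) ×ˢ (T ∩ W), F q = ∑ q ∈ S ×ˢ T, F q := by
  have hmaps : ∀ q ∈ S ×ˢ T, blockLabel P q ∈ P.parts ×ˢ P.parts := fun q _ ↦
    mem_product.2 ⟨P.part_mem.2 (mem_univ _), P.part_mem.2 (mem_univ _)⟩
  rw [← sum_product', ← sum_fiberwise_of_maps_to hmaps]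
  refine sum_congr rfl fun UW hUW ↦ sum_congr ?_ fun _ _ ↦ rfl
  obtain ⟨hU, hW⟩ := mem_product.1 hUW
  ext q
  simp only [mem_product, mem_inter, mem_filter, ← P.part_eq_iff_mem hU, ← P.part_eq_iff_mem hW,
    blockLabel, Prod.ext_iff, Prod.map_fst, Prod.map_snd]
  tauto

/-- The union of the parts of `P` contained in `A`. -/
def core (P : Finpartition (univ : Finset V)) (A : Finset V) : Finset V :=
  {x | P.part x ⊆ A}

lemma mem_core {x : V} : x ∈ core P A ↔ P.part x ⊆ A := by
  simp only [core, mem_filter_univ]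

lemma core_subset (P : Finpartition (univ : Finset V)) (A : Finset V) : core P A ⊆ A :=
  fun x hx ↦ mem_core.1 hx (P.mem_part (mem_univ x))

lemma core_bot (A : Finset V) : core ⊥ A = A := by
  ext x
  have hx : {x} ∈ (⊥ : Finpartition (univ : Finset V)).parts :=
    Finpartition.mem_bot_iff.2 ⟨x, mem_univ x, rfl⟩
  rw [mem_core, Finpartition.part_eq_of_mem _ hx (mem_singleton_self x), singleton_subset_iff]

lemma mem_core_product_factorsThrough (P : Finpartition (univ : Finset V)) (S T : Finset V) :
    (· ∈ core P S ×ˢ core P T).FactorsThrough (blockLabel P) := by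
  rintro ⟨x, y⟩ ⟨x', y'⟩ hxy
  obtain ⟨hx, hy⟩ := Prod.ext_iff.1 hxy
  simp only [blockLabel, Prod.map_fst, Prod.map_snd] at hx hy
  simp only [mem_product, mem_core, hx, hy]

end Blocks

section Density

variable {V : Type*} (G : SimpleGraph V)

/-- The adjacency relation of `G` as a `0/1`-valued function on ordered pairs of vertices. -/
noncomputable def edgeIndicator (q : V × V) : ℝ :=
  if G.Adj q.1 q.2 then 1 else 0

lemma edgeIndicator_mem_Icc (q : V × V) : edgeIndicator G q ∈ Set.Icc 0 1 := by
  unfold edgeIndicator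
  split_ifs <;> simp

variable [Fintype V]

lemma dens_eq_expect (A B : Finset V) : dens G A B = 𝔼 q ∈ A ×ˢ B, edgeIndicator G q := by
  simp only [_root_.dens, eCnt, edgeIndicator, expect_eq_sum_div_card, sum_boole, card_product,
    Nat.cast_mul]

variable [DecidableEq V] (P : Finpartition (univ : Finset V))

/-- The density, with respect to `P`, of the block containing a pair of vertices. -/
noncomputable abbrev blockDensity : V × V → ℝ :=
  fiberMean (blockLabel P) (edgeIndicator G)

/-- The `L²` energy of `P`: the mean square of its block densities. -/
noncomputable abbrev energy : ℝ :=
  fiberEnergy (blockLabel P) (edgeIndicator G)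

variable {P} in
lemma blockDensity_eq_dens {U W : Finset V} (hU : U ∈ P.parts) (hW : W ∈ P.parts) {q : V × V}
    (hq : q ∈ U ×ˢ W) : blockDensity G P q = dens G U W := by
  obtain ⟨hqU, hqW⟩ := mem_product.1 hq
  rw [dens_eq_expect, blockDensity, fiberMean]
  congr 1
  ext r
  rw [mem_filter_univ, mem_product, ← P.part_eq_iff_mem hU, ← P.part_eq_iff_mem hW, Prod.ext_iff]
  simp only [blockLabel, Prod.map_fst, Prod.map_snd, P.part_eq_of_mem hU hqU,
    P.part_eq_of_mem hW hqW]

lemma blockDensity_mem_Icc (q : V × V) : blockDensity G P q ∈ Set.Icc 0 1 :=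
  fiberMean_mem_Icc (edgeIndicator_mem_Icc G) q

lemma energy_mem_Icc : energy G P ∈ Set.Icc 0 1 := by
  constructor
  · exact expect_nonneg fun q _ ↦ sq_nonneg _
  · cases isEmpty_or_nonempty V
    · simp [energy, fiberEnergy]
    refine expect_le univ_nonempty fun q _ ↦ ?_
    obtain ⟨h0, h1⟩ := blockDensity_mem_Icc G P q
    exact pow_le_one₀ h0 h1

end Density

section EnergyIncrement

lemma sum_product_le_sum_product_add {α β : Type*} [DecidableEq α] [DecidableEq β]
    {A A' : Finset α} {B B' : Finset β} (hA : A' ⊆ A) (hB : B' ⊆ B) {F : α × β → ℝ}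
    (hF : ∀ q, F q ≤ 1) :
    ∑ q ∈ A ×ˢ B, F q ≤ ∑ q ∈ A' ×ˢ B', F q + (#(A \ A') * #B + #A * #(B \ B')) := by
  have hcover : (A ×ˢ B) \ (A' ×ˢ B') ⊆ (A \ A') ×ˢ B ∪ A ×ˢ (B \ B') := by
    intro q
    simp only [mem_sdiff, mem_product, mem_union]
    tauto
  have hcard : #((A ×ˢ B) \ (A' ×ˢ B')) ≤ #(A \ A') * #B + #A * #(B \ B') := by
    simpa only [card_product] using (card_le_card hcover).trans (card_union_le _ _)
  have hlost : ∑ q ∈ (A ×ˢ B) \ (A' ×ˢ B'), F q ≤ #((A ×ˢ B) \ (A' ×ˢ B')) := by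
    simpa using sum_le_card_nsmul _ F 1 fun q _ ↦ hF q
  rw [← sum_sdiff (product_subset_product hA hB), add_comm]
  gcongr
  exact hlost.trans (mod_cast hcard)

variable {V : Type*} [Fintype V] [DecidableEq V] (G : SimpleGraph V)
  (P : Finpartition (univ : Finset V)) {Q : Finpartition (univ : Finset V)} {S T : Finset V} {ε : ℝ}

/-- The weighted sum `∑ (|Sᵢ||Tⱼ| / (|S||T|)) |d(Sᵢ, Tⱼ) - d(Vᵢ, Vⱼ)|` which weak regularity
bounds. -/
noncomputable def discrepancy (S T : Finset V) : ℝ :=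
  ∑ U ∈ P.parts, ∑ W ∈ P.parts, (#(S ∩ U) : ℝ) * #(T ∩ W) / (#S * #T) *
    |dens G (S ∩ U) (T ∩ W) - dens G U W|

variable {P} in
lemma sum_edgeIndicator_sub_blockDensity {A B U W : Finset V} (hU : U ∈ P.parts)
    (hW : W ∈ P.parts) (hA : A ⊆ U) (hB : B ⊆ W) :
    ∑ q ∈ A ×ˢ B, (edgeIndicator G q - blockDensity G P q) =
      #A * #B * (dens G A B - dens G U W) := by
  have hblock : ∀ q ∈ A ×ˢ B, blockDensity G P q = dens G U W := fun q hq ↦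
    blockDensity_eq_dens G hU hW (product_subset_product hA hB hq)
  rw [sum_sub_distrib, sum_congr rfl hblock, ← card_mul_expect, ← dens_eq_expect, sum_const,
    card_product, nsmul_eq_mul, Nat.cast_mul, mul_sub]

lemma exists_discrepancy_eq_correlation (S T : Finset V) :
    ∃ h : V × V → ℝ, h.FactorsThrough (blockLabel P) ∧ (∀ q, |h q| ≤ 1) ∧
      discrepancy G P S T =
        (∑ q ∈ S ×ˢ T, (edgeIndicator G q - blockDensity G P q) * h q) / (#S * #T) := by
  let deviation (U W : Finset V) : ℝ := dens G (S ∩ U) (T ∩ W) - dens G U W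
  let σ (UW : Finset V × Finset V) : ℝ := SignType.sign (deviation UW.1 UW.2)
  refine ⟨σ ∘ blockLabel P, fun q r hqr ↦ congrArg σ hqr, fun q ↦ ?_, ?_⟩
  · dsimp only [Function.comp_apply, σ]
    cases SignType.sign (deviation _ _) <;> simp
  rw [← sum_blocks P S T, discrepancy, sum_div]
  refine sum_congr rfl fun U hU ↦ ?_
  rw [sum_div]
  refine sum_congr rfl fun W hW ↦ ?_
  have hσ : ∀ q ∈ (S ∩ U) ×ˢ (T ∩ W), σ (blockLabel P q) = σ (U, W) := by
    intro q hq
    obtain ⟨h₁, h₂⟩ := mem_product.1 hq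
    exact congrArg σ (Prod.ext (P.part_eq_of_mem hU (mem_inter.1 h₁).2)
      (P.part_eq_of_mem hW (mem_inter.1 h₂).2))
  calc (#(S ∩ U) : ℝ) * #(T ∩ W) / (#S * #T) * |deviation U W|
      = #(S ∩ U) * #(T ∩ W) * deviation U W * σ (U, W) / (#S * #T) := by
        rw [← self_mul_sign]
        ring
    _ = (∑ q ∈ (S ∩ U) ×ˢ (T ∩ W), (edgeIndicator G q - blockDensity G P q)) * σ (U, W) /
          (#S * #T) := by
        rw [sum_edgeIndicator_sub_blockDensity G hU hW inter_subset_right inter_subset_right]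
    _ = _ := by
        rw [sum_mul]
        exact congrArg (· / _) (sum_congr rfl fun q hq ↦ by rw [Function.comp_apply, hσ q hq])

variable {P}

lemma sq_correlation_core_le (hQP : Q ≤ P) {h : V × V → ℝ} (hh : h.FactorsThrough (blockLabel P))
    (hh1 : ∀ q, |h q| ≤ 1) :
    (∑ q ∈ core Q S ×ˢ core Q T, (edgeIndicator G q - blockDensity G P q) * h q) ^ 2 ≤
      #S * #T * ((Fintype.card V : ℝ) ^ 2 * (energy G Q - energy G P)) := by
  have hlabel := blockLabel_factorsThrough_of_le hQP
  have hnonneg : 0 ≤ (Fintype.card (V × V) : ℝ) * (energy G Q - energy G P) := by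
    rw [card_mul_fiberEnergy_sub hlabel]
    positivity
  have hcore : (#(core Q S ×ˢ core Q T) : ℝ) ≤ #S * #T := by
    rw [card_product, Nat.cast_mul]
    gcongr <;> exact core_subset _ _
  calc _ ≤ (#(core Q S ×ˢ core Q T) : ℝ) *
          (Fintype.card (V × V) * (energy G Q - energy G P)) :=
        sq_sum_mul_sub_fiberMean_le hlabel (mem_core_product_factorsThrough Q S T) hh hh1
    _ ≤ #S * #T * (Fintype.card (V × V) * (energy G Q - energy G P)) := by gcongr
    _ = _ := by rw [Fintype.card_prod, Nat.cast_mul, sq]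

lemma le_sum_core_product {F : V × V → ℝ} (hF : ∀ q, F q ≤ 1) (hε : 0 ≤ ε)
    (hS : ε * Fintype.card V ≤ #S) (hT : ε * Fintype.card V ≤ #T)
    (hS' : #(S \ core Q S) ≤ ε ^ 2 / 8 * Fintype.card V)
    (hT' : #(T \ core Q T) ≤ ε ^ 2 / 8 * Fintype.card V)
    (hsum : ε * (#S * #T) ≤ ∑ q ∈ S ×ˢ T, F q) :
    3 / 4 * ε * (#S * #T) ≤ ∑ q ∈ core Q S ×ˢ core Q T, F q := by
  have hloss := sum_product_le_sum_product_add (core_subset Q S) (core_subset Q T) hF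
  have hlossS : (#(S \ core Q S) : ℝ) * #T ≤ ε / 8 * #S * #T := by
    gcongr
    linarith [mul_le_mul_of_nonneg_left hS hε]
  have hlossT : (#S : ℝ) * #(T \ core Q T) ≤ #S * (ε / 8 * #T) := by
    gcongr
    linarith [mul_le_mul_of_nonneg_left hT hε]
  linarith

lemma energy_add_le_energy_of_lt_discrepancy (hε : 0 < ε) (hQP : Q ≤ P)
    (hS : ε * Fintype.card V ≤ #S) (hT : ε * Fintype.card V ≤ #T)
    (hS' : #(S \ core Q S) ≤ ε ^ 2 / 8 * Fintype.card V)
    (hT' : #(T \ core Q T) ≤ ε ^ 2 / 8 * Fintype.card V) (hirr : ε < discrepancy G P S T) :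
    energy G P + ε ^ 4 / 2 ≤ energy G Q := by
  obtain ⟨h, hh, hh1, hdisc⟩ := exists_discrepancy_eq_correlation G P S T
  have hcard : 0 < (#S : ℝ) * #T := by
    refine lt_of_le_of_ne (by positivity) fun h0 ↦ ?_
    rw [hdisc, ← h0, div_zero] at hirr
    exact hirr.not_gt hε
  have hn : 0 < (Fintype.card V : ℝ) :=
    (pos_of_mul_pos_left hcard (Nat.cast_nonneg _)).trans_le (mod_cast card_le_univ S)
  have hcorr : 3 / 4 * ε * (#S * #T) ≤
      ∑ q ∈ core Q S ×ˢ core Q T, (edgeIndicator G q - blockDensity G P q) * h q := by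
    refine le_sum_core_product (fun q ↦ ?_) hε.le hS hT hS' hT' ?_
    · refine (le_abs_self _).trans (abs_mul _ (h q) ▸ mul_le_one₀ ?_ (abs_nonneg _) (hh1 q))
      exact Real.dist_le_of_mem_Icc_01 (edgeIndicator_mem_Icc G q) (blockDensity_mem_Icc G P q)
    · rw [hdisc, lt_div_iff₀ hcard] at hirr
      exact hirr.le
  have hgain : 9 / 16 * ε ^ 2 * (#S * #T) ≤ Fintype.card V ^ 2 * (energy G Q - energy G P) := by
    have hsq := (pow_le_pow_left₀ (by positivity) hcorr 2).trans
      (sq_correlation_core_le G hQP hh hh1)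
    exact le_of_mul_le_mul_left (by linarith) hcard
  have hgain' : 9 / 16 * ε ^ 4 ≤ energy G Q - energy G P := by
    refine le_of_mul_le_mul_left ?_ (pow_pos hn 2)
    calc (Fintype.card V : ℝ) ^ 2 * (9 / 16 * ε ^ 4)
        = 9 / 16 * ε ^ 2 * (ε * Fintype.card V * (ε * Fintype.card V)) := by ring
      _ ≤ 9 / 16 * ε ^ 2 * (#S * #T) := by gcongr
      _ ≤ _ := hgain
  linarith [pow_pos hε 4]

end EnergyIncrement

section EquitableRefinement

variable {V : Type*} [DecidableEq V] {𝓕 : Finset (Finset V)}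

lemma inter_mem_atomise (h𝓕 : (𝓕 : Set (Finset V)).PairwiseDisjoint id) {A U : Finset V}
    (hA : A ∈ 𝓕) (hne : (A ∩ U).Nonempty) : A ∩ U ∈ (Finpartition.atomise U 𝓕).parts := by
  refine Finpartition.mem_atomise.2 ⟨hne, {A}, singleton_subset_iff.2 hA, ?_⟩
  ext x
  simp only [mem_filter, mem_singleton, mem_inter, and_comm (a := x ∈ A), and_congr_right_iff]
  refine fun _ ↦ ⟨fun h ↦ (h A hA).1 rfl, fun hx B hB ↦ ⟨fun h ↦ h ▸ hx, fun hxB ↦ ?_⟩⟩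
  exact h𝓕.elim_finset hB hA x hxB hx

lemma exists_equitable_finpartition_covering (h𝓕 : (𝓕 : Set (Finset V)).PairwiseDisjoint id)
    {U : Finset V} {t M : ℕ} (ht : t ≠ 0) (hlow : t * M ≤ #U) (hup : #U ≤ t * M + M) :
    ∃ R : Finpartition U, #R.parts = M ∧ (∀ W ∈ R.parts, #W = t ∨ #W = t + 1) ∧
      ∀ A ∈ 𝓕, #((A ∩ U) \ {W ∈ R.parts | W ⊆ A}.biUnion id) ≤ t := by
  obtain ⟨r, hr⟩ := Nat.exists_eq_add_of_le hlow
  obtain ⟨q, rfl⟩ : ∃ q, M = r + q := Nat.exists_eq_add_of_le (by lia)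
  have hsize : q * t + r * (t + 1) = #U := by rw [hr]; ring
  set R := (Finpartition.atomise U 𝓕).equitabilise hsize
  refine ⟨R, ?_, fun W ↦ Finpartition.card_eq_of_mem_parts_equitabilise, fun A hA ↦ ?_⟩
  · rw [Finpartition.card_parts_equitabilise _ hsize ht, add_comm]
  obtain hempty | hne := (A ∩ U).eq_empty_or_nonempty
  · simp [hempty]
  · refine (card_le_card (sdiff_subset_sdiff Subset.rfl ?_)).trans
      (Finpartition.card_parts_equitabilise_subset_le _ hsize (inter_mem_atomise h𝓕 hA hne))
    exact biUnion_subset_biUnion_of_subset_left _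
      (monotone_filter_right _ fun W _ hW ↦ hW.trans inter_subset_left)

variable [Fintype V] {P : Finpartition (univ : Finset V)}

lemma sum_card_inter_parts (P : Finpartition (univ : Finset V)) (B : Finset V) :
    ∑ U ∈ P.parts, #(B ∩ U) = #B := by
  rw [card_eq_sum_card_fiberwise (f := P.part) fun x _ ↦ P.part_mem.2 (mem_univ x)]
  refine sum_congr rfl fun U hU ↦ congrArg card ?_
  ext x
  rw [mem_inter, mem_filter, ← P.part_eq_iff_mem hU]

lemma sdiff_core_bind_inter_subset (R : ∀ U ∈ P.parts, Finpartition U) {U : Finset V}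
    (hU : U ∈ P.parts) (A : Finset V) :
    (A \ core (P.bind R) A) ∩ U ⊆ (A ∩ U) \ {W ∈ (R U hU).parts | W ⊆ A}.biUnion id := by
  intro x hx
  simp only [mem_inter, mem_sdiff, mem_core] at hx
  simp only [mem_sdiff, mem_inter, mem_biUnion, mem_filter, id, not_exists, not_and]
  refine ⟨⟨hx.1.1, hx.2⟩, fun W hW hxW ↦ hx.1.2 ?_⟩
  rw [(P.bind R).part_eq_of_mem (Finpartition.mem_bind.2 ⟨U, hU, hW.1⟩) hxW]
  exact hW.2

lemma exists_equitable_refinement_of_le_average (hP : P.IsEquipartition)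
    (h𝓕 : (𝓕 : Set (Finset V)).PairwiseDisjoint id) {M : ℕ} (hM : 0 < M)
    (hM' : M ≤ Fintype.card V / #P.parts) :
    ∃ Q ≤ P, Q.IsEquipartition ∧ #Q.parts = #P.parts * M ∧
      ∀ A ∈ 𝓕, #(A \ core Q A) * M ≤ Fintype.card V := by
  set t := Fintype.card V / #P.parts / M
  have hlow : ∀ U ∈ P.parts, t * M ≤ #U := fun U hU ↦
    (Nat.div_mul_le_self _ _).trans (hP.average_le_card_part hU)
  have hup : ∀ U ∈ P.parts, #U ≤ t * M + M := fun U hU ↦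
    (hP.card_part_le_average_add_one hU).trans (Nat.lt_div_mul_add hM)
  choose! R hRcard hRsize hRcover using fun U hU ↦
    exists_equitable_finpartition_covering h𝓕 (Nat.div_pos hM' hM).ne' (hlow U hU) (hup U hU)
  refine ⟨P.bind fun U _ ↦ R U, fun W hW ↦ ?_, ?_, ?_, fun A hA ↦ ?_⟩
  · obtain ⟨U, hU, hWU⟩ := Finpartition.mem_bind.1 hW
    exact ⟨U, hU, (R U).le hWU⟩
  · refine Set.equitableOn_iff_exists_eq_eq_add_one.2 ⟨t, fun W hW ↦ ?_⟩
    obtain ⟨U, hU, hWU⟩ := Finpartition.mem_bind.1 hW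
    exact hRsize U hU W hWU
  · rw [Finpartition.card_bind, sum_congr rfl fun U _ ↦ hRcard U.1 U.2, sum_const, card_attach,
      smul_eq_mul]
  · rw [← sum_card_inter_parts P, sum_mul]
    calc _ ≤ ∑ U ∈ P.parts, #U := sum_le_sum fun U hU ↦ by
          refine (Nat.mul_le_mul_right M ((card_le_card ?_).trans (hRcover U hU A hA))).trans
            (hlow U hU)
          exact sdiff_core_bind_inter_subset _ hU A
      _ = Fintype.card V := P.sum_card_parts

lemma exists_equitable_refinement (hP : P.IsEquipartition)
    (h𝓕 : (𝓕 : Set (Finset V)).PairwiseDisjoint id) {M : ℕ} (hM : 0 < M) :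
    ∃ Q ≤ P, Q.IsEquipartition ∧ #Q.parts ≤ #P.parts * M ∧
      ∀ A ∈ 𝓕, #(A \ core Q A) * M ≤ Fintype.card V := by
  obtain hM' | hM' := le_or_gt M (Fintype.card V / #P.parts)
  · obtain ⟨Q, hQP, hQ, hcard, hcore⟩ := exists_equitable_refinement_of_le_average hP h𝓕 hM hM'
    exact ⟨Q, hQP, hQ, hcard.le, hcore⟩
  · -- The parts of `P` have at most `M` vertices, so cutting them into singletons is cheap enough.
    refine ⟨⊥, bot_le, Finpartition.bot_isEquipartition _, ?_, fun A _ ↦ by simp [core_bot]⟩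
    rw [Finpartition.card_bot, ← P.sum_card_parts, ← smul_eq_mul]
    exact sum_le_card_nsmul _ _ _ fun U hU ↦ (hP.card_part_le_average_add_one hU).trans hM'

end EquitableRefinement

section WeakRegularity

variable {V : Type*} [Fintype V] [DecidableEq V] {G : SimpleGraph V} {ε : ℝ}
  {P : Finpartition (univ : Finset V)}

lemma exists_energy_increment (hε : 0 < ε) {M : ℕ} (hM : 8 / ε ^ 2 ≤ M) (hP : P.IsEquipartition)
    (hirr : ¬ IsWeakRegular G ε P) :
    ∃ Q ≤ P, Q.IsEquipartition ∧ #Q.parts ≤ #P.parts * M ∧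
      energy G P + ε ^ 4 / 2 ≤ energy G Q := by
  unfold IsWeakRegular at hirr
  push Not at hirr
  obtain ⟨S, T, hST, hS, hT, hirr⟩ := hirr
  have hMpos : (0 : ℝ) < M := lt_of_lt_of_le (by positivity) hM
  have hpair : (({S, T} : Finset (Finset V)) : Set (Finset V)).PairwiseDisjoint id := by
    rw [coe_pair]
    exact Set.pairwise_pair_of_symm.2 fun _ ↦ hST
  obtain ⟨Q, hQP, hQ, hcard, hcore⟩ :=
    exists_equitable_refinement hP hpair (Nat.cast_pos.1 hMpos)
  have hsmall : ∀ A ∈ ({S, T} : Finset (Finset V)),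
      (#(A \ core Q A) : ℝ) ≤ ε ^ 2 / 8 * Fintype.card V := fun A hA ↦ by
    have hcoreA : (#(A \ core Q A) : ℝ) * M ≤ Fintype.card V := mod_cast hcore A hA
    calc (#(A \ core Q A) : ℝ) ≤ Fintype.card V / M := (le_div_iff₀ hMpos).2 hcoreA
      _ ≤ Fintype.card V / (8 / ε ^ 2) := by gcongr
      _ = ε ^ 2 / 8 * Fintype.card V := by field_simp
  exact ⟨Q, hQP, hQ, hcard, energy_add_le_energy_of_lt_discrepancy G hε hQP hS hT
    (hsmall S (by simp)) (hsmall T (by simp)) hirr⟩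

lemma ceil_pow_floor_le (hε : 0 < ε) :
    (⌈8 / ε ^ 2⌉₊ : ℝ) ^ ⌊2 / ε ^ 4⌋₊ ≤ 2 ^ ((16 : ℝ) / ε ^ 5) := by
  have hbase : (⌈8 / ε ^ 2⌉₊ : ℝ) ≤ Real.exp (4 / ε) :=
    calc (⌈8 / ε ^ 2⌉₊ : ℝ) ≤ 8 / ε ^ 2 + 1 := (Nat.ceil_lt_add_one (by positivity)).le
      _ ≤ 1 + 4 / ε + (4 / ε) ^ 2 / 2 := by
        have : (4 / ε) ^ 2 / 2 = 8 / ε ^ 2 := by ring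
        have : 0 < 4 / ε := by positivity
        linarith
      _ ≤ Real.exp (4 / ε) := Real.quadratic_le_exp_of_nonneg (by positivity)
  calc (⌈8 / ε ^ 2⌉₊ : ℝ) ^ ⌊2 / ε ^ 4⌋₊
      ≤ Real.exp (4 / ε) ^ ⌊2 / ε ^ 4⌋₊ := by gcongr
    _ = Real.exp (⌊2 / ε ^ 4⌋₊ * (4 / ε)) := (Real.exp_nat_mul _ _).symm
    _ ≤ Real.exp (2 / ε ^ 4 * (4 / ε)) := by
        gcongr
        exact Nat.floor_le (by positivity)
    _ = Real.exp (1 / 2 * (16 / ε ^ 5)) := by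
        congr 1
        field_simp
        norm_num
    _ ≤ Real.exp (Real.log 2 * (16 / ε ^ 5)) := by
        gcongr
        linarith [Real.log_two_gt_d9]
    _ = 2 ^ ((16 : ℝ) / ε ^ 5) := (Real.rpow_def_of_pos two_pos _).symm

theorem exists_isWeakRegular_refinement (G : SimpleGraph V) (hε : 0 < ε)
    (hP : P.IsEquipartition) :
    ∃ Q ≤ P, Q.IsEquipartition ∧ IsWeakRegular G ε Q ∧
      (#Q.parts : ℝ) ≤ #P.parts * 2 ^ ((16 : ℝ) / ε ^ 5) := by
  set M := ⌈8 / ε ^ 2⌉₊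
  set N := ⌊2 / ε ^ 4⌋₊
  have hrounds : 1 < (N + 1) * (ε ^ 4 / 2) := by
    have := Nat.lt_floor_add_one (2 / ε ^ 4)
    rw [div_lt_iff₀ (by positivity)] at this
    linarith
  obtain ⟨⟨Q, hQ⟩, hQP, hreg, hcard⟩ := exists_good_of_potential_bounded
    (X := {Q : Finpartition (univ : Finset V) // Q.IsEquipartition}) (x₀ := ⟨P, hP⟩)
    (good := fun Q ↦ IsWeakRegular G ε Q) (φ := fun Q ↦ energy G Q) (size := fun Q ↦ #Q.1.parts)
    (E := (· * M)) (c := ε ^ 4 / 2) (fun _ _ h ↦ Nat.mul_le_mul_right M h)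
    (fun k ↦ Nat.le_mul_of_pos_right k (Nat.ceil_pos.2 (by positivity))) N
    (fun Q _ ↦ by linarith [(energy_mem_Icc G Q.1).2, (energy_mem_Icc G P).1])
    (fun R _ hR ↦ by
      obtain ⟨Q, hQR, hQ, hcard, hinc⟩ := exists_energy_increment hε (Nat.le_ceil _) R.2 hR
      exact ⟨⟨Q, hQ⟩, hQR, hcard, hinc⟩)
  refine ⟨Q, hQP, hQ, hreg, ?_⟩
  rw [mul_right_iterate] at hcard
  calc (#Q.parts : ℝ) ≤ #P.parts * (M : ℝ) ^ N := mod_cast hcard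
    _ ≤ #P.parts * 2 ^ ((16 : ℝ) / ε ^ 5) := by gcongr; exact ceil_pow_floor_le hε

end WeakRegularity

section Iteration

/-- The size recursion `E(x) = x · 2^(16 / g(x)⁵)` of the iteration, rounded up to a natural
number. -/
noncomputable def regularityStep (g : ℕ → ℝ) (x : ℕ) : ℕ :=
  ⌈(x : ℝ) * 2 ^ ((16 : ℝ) / g x ^ 5)⌉₊

variable {g : ℕ → ℝ}

lemma id_le_regularityStep (hg : ∀ n, 0 < g n) : id ≤ regularityStep g := fun x ↦ by
  have hfactor : (1 : ℝ) ≤ 2 ^ ((16 : ℝ) / g x ^ 5) :=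
    Real.one_le_rpow one_le_two (by have := hg x; positivity)
  exact_mod_cast (le_mul_of_one_le_right x.cast_nonneg hfactor).trans (Nat.le_ceil _)

lemma monotone_regularityStep (hg : ∀ n, 0 < g n) (hgmono : Antitone g) :
    Monotone (regularityStep g) := fun x y hxy ↦ by
  have hgy := hg y
  have hgxy := hgmono hxy
  unfold regularityStep
  gcongr
  exact one_le_two

theorem iterated_weak_regularity_general {V : Type*} [Fintype V] [DecidableEq V]
    (G : SimpleGraph V) (hg : ∀ n, 0 < g n) (hgmono : Antitone g) {α L : ℝ} (hα : 0 < α)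
    (hL : 0 < L) {P₀ : Finpartition (univ : Finset V)} (hP₀ : P₀.IsEquipartition)
    {f : Finpartition (univ : Finset V) → ℝ} (hf : ∀ P ≤ P₀, f P - f P₀ ≤ L) :
    ∃ P Q : Finpartition (univ : Finset V),
      P.IsEquipartition ∧ Q.IsEquipartition ∧ Q ≤ P ∧ P ≤ P₀ ∧
      IsWeakRegular G (g #P.parts) Q ∧ f Q - f P < α * L ∧
      #P.parts ≤ (regularityStep g)^[⌊1 / α⌋₊] #P₀.parts := by
  have hrounds : L < (⌊1 / α⌋₊ + 1) * (α * L) := by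
    rw [← mul_assoc]
    exact lt_mul_of_one_lt_left hL ((div_lt_iff₀ hα).1 (Nat.lt_floor_add_one _))
  obtain ⟨⟨P, hP⟩, hPP₀, ⟨Q, hQP, hQ, hreg, hcheap⟩, hcard⟩ := exists_good_of_potential_bounded
    (X := {P : Finpartition (univ : Finset V) // P.IsEquipartition}) (x₀ := ⟨P₀, hP₀⟩)
    (good := fun P ↦ ∃ Q ≤ P.1, Q.IsEquipartition ∧ IsWeakRegular G (g #P.1.parts) Q ∧
      f Q - f P.1 < α * L)
    (φ := fun P ↦ f P) (size := fun P ↦ #P.1.parts) (c := α * L)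
    (monotone_regularityStep hg hgmono) (id_le_regularityStep hg) ⌊1 / α⌋₊
    (fun P hP ↦ by linarith [hf P hP])
    (fun P _ hbad ↦ by
      obtain ⟨Q, hQP, hQ, hreg, hcard⟩ := exists_isWeakRegular_refinement G (hg #P.1.parts) P.2
      refine ⟨⟨Q, hQ⟩, hQP, mod_cast hcard.trans (Nat.le_ceil _), ?_⟩
      by_contra! hlt
      exact hbad ⟨Q, hQP, hQ, hreg, by linarith⟩)
  exact ⟨P, Q, hP, hQ, hQP, hPP₀, hreg, hcheap, hcard⟩

end Iteration

section Entropy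

lemma map_expect_le_of_convexOn {ι : Type*} {s : Finset ι} {I : Set ℝ} {φ : ℝ → ℝ} {f : ι → ℝ}
    (hφ : ConvexOn ℝ I φ) (hs : s.Nonempty) (hf : ∀ i ∈ s, f i ∈ I) :
    φ (𝔼 i ∈ s, f i) ≤ 𝔼 i ∈ s, φ (f i) := by
  have hcard : (#s : ℝ) ≠ 0 := Nat.cast_ne_zero.2 hs.card_ne_zero
  have hjensen := hφ.map_sum_le (t := s) (w := fun _ ↦ (#s : ℝ)⁻¹) (fun _ _ ↦ by positivity)
    (by rw [sum_const, nsmul_eq_mul, mul_inv_cancel₀ hcard]) hf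
  simpa only [expect_eq_sum_div_card, div_eq_inv_mul, mul_sum, smul_eq_mul] using hjensen

variable {V : Type*} [Fintype V] (G : SimpleGraph V)

lemma graphDensity_eq_expect : graphDensity G = 𝔼 q, edgeIndicator G q := by
  have hcard : 2 * #G.edgeFinset = #{q : V × V | G.Adj q.1 q.2} := G.two_mul_card_edgeFinset
  rw [graphDensity, ← SimpleGraph.coe_edgeFinset, Set.ncard_coe_finset]
  simp only [edgeIndicator, Fintype.expect_eq_sum_div_card, sum_boole, Fintype.card_prod, ← hcard]
  push_cast
  rw [sq]

lemma graphDensity_lt_one [Nonempty V] : graphDensity G < 1 := by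
  rw [graphDensity_eq_expect]
  obtain ⟨v⟩ := ‹Nonempty V›
  refine expect_lt (fun q _ ↦ (edgeIndicator_mem_Icc G q).2) ⟨(v, v), mem_univ _, ?_⟩
  simp [edgeIndicator]

lemma nonempty_of_graphDensity_pos (hG : 0 < graphDensity G) : Nonempty V := by
  by_contra! hV
  simp [graphDensity] at hG

variable [DecidableEq V] (P : Finpartition (univ : Finset V))

lemma pot_eq_expect : pot G P P = 𝔼 q, Hent (blockDensity G P q) := by
  rw [Fintype.expect_eq_sum_div_card, Fintype.card_prod, Nat.cast_mul, ← univ_product_univ,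
    ← sum_blocks P, sum_div]
  refine sum_congr rfl fun U hU ↦ ?_
  rw [sum_div]
  refine sum_congr rfl fun W hW ↦ ?_
  rw [univ_inter, univ_inter, sum_congr rfl fun q hq ↦ by rw [blockDensity_eq_dens G hU hW hq],
    sum_const, card_product, nsmul_eq_mul, Nat.cast_mul, card_univ]
  ring

lemma pot_nonpos : pot G P P ≤ 0 := by
  rw [pot_eq_expect, ← neg_nonneg, ← expect_neg_distrib]
  refine expect_nonneg fun q _ ↦ neg_nonneg.2 ?_
  obtain ⟨h0, h1⟩ := blockDensity_mem_Icc G P q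
  exact Real.mul_log_nonpos h0 h1

lemma Hent_graphDensity_le_pot [Nonempty V] : Hent (graphDensity G) ≤ pot G P P := by
  calc Hent (graphDensity G) = Hent (𝔼 q, blockDensity G P q) := by
        rw [graphDensity_eq_expect, Fintype.expect_eq_sum_div_card,
          Fintype.expect_eq_sum_div_card, sum_fiberMean]
    _ ≤ 𝔼 q, Hent (blockDensity G P q) :=
        map_expect_le_of_convexOn Real.convexOn_mul_log univ_nonempty fun q _ ↦
          (blockDensity_mem_Icc G P q).1
    _ = pot G P P := (pot_eq_expect G P).symm

end Entropy

/-- **The iterative argument (Lemma 3.7).**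
Let `α > 0`, `s ∈ ℕ` and `g : ℕ → (0,1)` be decreasing. For every graph `G` of density
`p > 0` and equipartition `P₀` of order `s`, there are equipartitions `Q ⪯ P ⪯ P₀` such
that `Q` is weak `g(|P|)`-regular, `H(Q) − H(P) < α·p·ln(1/p)`, and
`|P| ≤ E^{(⌊1/α⌋)}(s)` where `E(x) = x·2^{16/g(x)⁵}`. -/
theorem iterated_weak_regularity (α : ℝ) (hα : 0 < α) (s : ℕ) (hs : 0 < s)
    (g : ℕ → ℝ) (hg : ∀ n, g n ∈ Set.Ioo (0 : ℝ) 1) (hgmono : Antitone g)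
    (V : Type) [Fintype V] [DecidableEq V] (G : SimpleGraph V)
    (p : ℝ) (hp : 0 < p) (hpd : graphDensity G = p)
    (P₀ : Finpartition (univ : Finset V)) (hP₀ : P₀.IsEquipartition)
    (hP₀s : P₀.parts.card = s) :
    ∃ P Q : Finpartition (univ : Finset V),
      P.IsEquipartition ∧ Q.IsEquipartition ∧ Q ≤ P ∧ P ≤ P₀ ∧
      IsWeakRegular G (g P.parts.card) Q ∧
      pot G Q Q - pot G P P < α * p * Real.log (1 / p) ∧
      P.parts.card ≤ (fun x : ℕ => ⌈(x : ℝ) * 2 ^ ((16 : ℝ) / g x ^ 5)⌉₊)^[⌊1 / α⌋₊] s := by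
  subst hpd hP₀s
  have := nonempty_of_graphDensity_pos G hp
  have hgap : 0 < graphDensity G * Real.log (1 / graphDensity G) :=
    mul_pos hp (Real.log_pos (one_lt_one_div hp (graphDensity_lt_one G)))
  have hbound : ∀ P ≤ P₀, pot G P P - pot G P₀ P₀ ≤
      graphDensity G * Real.log (1 / graphDensity G) := fun P _ ↦ by
    have hlow := Hent_graphDensity_le_pot G P₀
    rw [Hent, ← neg_le_neg_iff, ← mul_neg, ← Real.log_inv, ← one_div] at hlow
    linarith [pot_nonpos G P]
  rw [mul_assoc]
  exact iterated_weak_regularity_general G (fun n ↦ (hg n).1) hgmono hα hgap hP₀ hbound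
end
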